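/- Every connected elder graph H contains a vertex v from which every vertex of H is reachable by a directed path. -/

import Mathlib

/-- A directed graph on a vertex type `V`: a set of ordered pairs of distinct vertices
such that no pair of vertices is joined in both directions. -/
structure Dgraph (V : Type) where
  adj : V → V → Prop
  asym : ∀ u v, adj u v → ¬ adj v u

/-- Two distinct non-adjacent vertices `u`, `v` form a fork if there is `w` with
edges `(u,w)` and `(v,w)`. -/
def Dgraph.Fork {V : Type} (H : Dgraph V) (u v : V) : Prop :=
  u ≠ v ∧ ¬ H.adj u v ∧ ¬ H.adj v u ∧ ∃ w, H.adj u w ∧ H.adj v w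

/-- An elder graph is a directed graph with no fork. -/
def Dgraph.Elder {V : Type} (H : Dgraph V) : Prop :=
  ∀ u v, ¬ H.Fork u v

/-- A directed graph is connected if its underlying undirected graph is connected. -/
def Dgraph.Connected {V : Type} (H : Dgraph V) : Prop :=
  Nonempty V ∧ ∀ u v : V, Relation.ReflTransGen (fun a b => H.adj a b ∨ H.adj b a) u v

/-!
Read backwards, having no fork is a one-step diamond property: two in-neighbours of a vertex
either coincide or one of them is an in-neighbour of the other. By the Church–Rosser theorem,
having a common ancestor is then an equivalence relation; as it contains the edges, any two
vertices of a connected elder graph have a common ancestor, and hence so does any finite set of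
vertices.
-/

namespace Dgraph

open Relation Function

variable {V : Type} {H : Dgraph V}

theorem Elder.eq_or_adj_or_adj (helder : H.Elder) {u v w : V} (hu : H.adj u w)
    (hv : H.adj v w) : u = v ∨ H.adj u v ∨ H.adj v u := by
  by_contra! h
  exact helder u v ⟨h.1, h.2.1, h.2.2, w, hu, hv⟩

theorem Elder.equivalence_join_reflTransGen_swap (helder : H.Elder) :
    Equivalence (Join (ReflTransGen (swap H.adj))) := by
  refine equivalence_join_reflTransGen fun w u v hu hv => ?_
  rcases helder.eq_or_adj_or_adj hu hv with rfl | huv | hvu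
  · exact ⟨u, .refl, .refl⟩
  · exact ⟨u, .refl, .single huv⟩
  · exact ⟨v, .single hvu, .refl⟩

theorem Elder.directed_reflTransGen_swap (helder : H.Elder) (hconn : H.Connected) :
    Directed (ReflTransGen (swap H.adj)) id := fun u v => by
  refine reflTransGen_le_of_equivalence_of_le helder.equivalence_join_reflTransGen_swap
    (fun a b hab => ?_) u v (hconn.2 u v)
  rcases hab with hab | hba
  · exact ⟨a, .refl, .single hab⟩
  · exact ⟨b, .single hba, .refl⟩

end Dgraph

theorem elder_connected_exists_source_general {V : Type} (H : Dgraph V) (helder : H.Elder)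
    (hconn : H.Connected) {s : Set V} (hs : s.Finite) :
    ∃ v : V, ∀ u ∈ s, Relation.ReflTransGen H.adj v u := by
  have : Nonempty V := hconn.1
  obtain ⟨v, hv⟩ := (helder.directed_reflTransGen_swap hconn).finite_set_le hs
  exact ⟨v, fun u hu => Relation.reflTransGen_swap.1 (hv u hu)⟩

/-- Every connected elder graph `H` contains a vertex `v` from which every vertex of
`H` is reachable by a directed path. -/
theorem elder_connected_exists_source {V : Type} [Fintype V] (H : Dgraph V)
    (helder : H.Elder) (hconn : H.Connected) :
    ∃ v : V, ∀ u : V, Relation.ReflTransGen H.adj v u := by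
  simpa using elder_connected_exists_source_general H helder hconn Set.finite_univ
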